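/- arXiv:1509.06344 — 13 statements merged into one kernel-verified Lean document; each statement's English description precedes it below -/
import Mathlib

section
/- Let (x,y) ∈ [-1,1] × [-1,1] with x ≠ 0 and y ≠ 0, and define u = x·√(x² + y² − x²y²)/√(x² + y²) and v = y·√(x² + y² − x²y²)/√(x² + y²). Then the FG-Squircular disc-to-square formulas recover (x,y): sgn(u·v)/(v·√2) · √(u² + v² − √((u² + v²)(u² + v² − 4u²v²))) = x and sgn(u·v)/(u·√2) · √(u² + v² − √((u² + v²)(u² + v² − 4u²v²))) = y. In particular the quantity u² + v² − 4u²v² is nonnegative. -/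
/-- The FG-Squircular disc-to-square formulas invert the square-to-disc map. -/
theorem fg_squircular_left_inverse
    (x y u v : ℝ)
    (hx : x ∈ Set.Icc (-1 : ℝ) 1) (hy : y ∈ Set.Icc (-1 : ℝ) 1)
    (hx0 : x ≠ 0) (hy0 : y ≠ 0)
    (hu : u = x * Real.sqrt (x ^ 2 + y ^ 2 - x ^ 2 * y ^ 2) / Real.sqrt (x ^ 2 + y ^ 2))
    (hv : v = y * Real.sqrt (x ^ 2 + y ^ 2 - x ^ 2 * y ^ 2) / Real.sqrt (x ^ 2 + y ^ 2)) :
    u ^ 2 + v ^ 2 - 4 * u ^ 2 * v ^ 2 ≥ 0 ∧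
    Real.sign (u * v) / (v * Real.sqrt 2) *
      Real.sqrt (u ^ 2 + v ^ 2 -
        Real.sqrt ((u ^ 2 + v ^ 2) * (u ^ 2 + v ^ 2 - 4 * u ^ 2 * v ^ 2))) = x ∧
    Real.sign (u * v) / (u * Real.sqrt 2) *
      Real.sqrt (u ^ 2 + v ^ 2 -
        Real.sqrt ((u ^ 2 + v ^ 2) * (u ^ 2 + v ^ 2 - 4 * u ^ 2 * v ^ 2))) = y := by
  have ha : x ^ 2 ≤ 1 := by nlinarith [hx.1, hx.2]
  have hb : y ^ 2 ≤ 1 := by nlinarith [hy.1, hy.2]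
  have ha0 : 0 < x ^ 2 := by positivity
  have hb0 : 0 < y ^ 2 := by positivity
  have hs : 0 < x ^ 2 + y ^ 2 := by positivity
  have hq : 0 < x ^ 2 + y ^ 2 - x ^ 2 * y ^ 2 := by nlinarith
  have hd : 0 ≤ x ^ 2 + y ^ 2 - 2 * (x ^ 2 * y ^ 2) := by nlinarith
  obtain ⟨T, hT⟩ : ∃ T, T = Real.sqrt (x ^ 2 + y ^ 2 - x ^ 2 * y ^ 2) /
    Real.sqrt (x ^ 2 + y ^ 2) := ⟨_, rfl⟩
  have hT0 : 0 < T := by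
    rw [hT]; exact div_pos (Real.sqrt_pos.2 hq) (Real.sqrt_pos.2 hs)
  have hT2 : T ^ 2 * (x ^ 2 + y ^ 2) = x ^ 2 + y ^ 2 - x ^ 2 * y ^ 2 := by
    rw [hT, div_pow, Real.sq_sqrt hq.le, Real.sq_sqrt hs.le]
    field_simp
  rw [mul_div_assoc, ← hT] at hu hv
  clear hT
  subst hu hv
  have hsq : ((x * T) ^ 2 + (y * T) ^ 2) *
      ((x * T) ^ 2 + (y * T) ^ 2 - 4 * (x * T) ^ 2 * (y * T) ^ 2)
      = (T ^ 2 * (x ^ 2 + y ^ 2 - 2 * (x ^ 2 * y ^ 2))) ^ 2 := by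
    linear_combination (-4 * T ^ 4 * x ^ 2 * y ^ 2) * hT2
  have hpos : 0 < (x * T) ^ 2 + (y * T) ^ 2 := by positivity
  have hsqrt : Real.sqrt ((x * T) ^ 2 + (y * T) ^ 2 -
        Real.sqrt (((x * T) ^ 2 + (y * T) ^ 2) *
          ((x * T) ^ 2 + (y * T) ^ 2 - 4 * (x * T) ^ 2 * (y * T) ^ 2)))
        = Real.sqrt 2 * (|x * y| * T) := by
    rw [hsq, Real.sqrt_sq (by positivity)]
    have h : (x * T) ^ 2 + (y * T) ^ 2 - T ^ 2 * (x ^ 2 + y ^ 2 - 2 * (x ^ 2 * y ^ 2))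
        = 2 * (|x * y| * T) ^ 2 := by
      rw [mul_pow |x * y|, sq_abs]; ring
    rw [h, Real.sqrt_mul (by norm_num), Real.sqrt_sq (by positivity)]
  have hsign : Real.sign (x * T * (y * T)) * |x * y| = x * y := by
    have e : x * T * (y * T) = (x * y) * T ^ 2 := by ring
    rw [e]
    rcases lt_or_gt_of_ne (mul_ne_zero hx0 hy0) with h | h
    · rw [Real.sign_of_neg (mul_neg_of_neg_of_pos h (by positivity)), abs_of_neg h]; ring
    · rw [Real.sign_of_pos (by positivity), abs_of_pos h]; ring
  have h2 : Real.sqrt 2 ≠ 0 := by positivity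
  refine ⟨?_, ?_, ?_⟩
  · by_contra hlt
    push Not at hlt
    have := mul_neg_of_pos_of_neg hpos hlt
    rw [hsq] at this
    exact absurd this (not_lt.2 (sq_nonneg _))
  · rw [hsqrt, div_mul_eq_mul_div, div_eq_iff (by positivity)]
    linear_combination (Real.sqrt 2 * T) * hsign
  · rw [hsqrt, div_mul_eq_mul_div, div_eq_iff (by positivity)]
    linear_combination (Real.sqrt 2 * T) * hsign
end

section
/- Let (u,v) ∈ ℝ² with u² + v² ≤ 1, u ≠ 0 and v ≠ 0, and define x = sgn(u·v)/(v·√2) · √(u² + v² − √((u² + v²)(u² + v² − 4u²v²))) and y = sgn(u·v)/(u·√2) · √(u² + v² − √((u² + v²)(u² + v² − 4u²v²))). Then (x,y) ≠ (0,0) and the FG-Squircular square-to-disc map recovers (u,v): x·√(x² + y² − x²y²)/√(x² + y²) = u and y·√(x² + y² − x²y²)/√(x² + y²) = v. -/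
/-- The FG-Squircular square-to-disc map inverts the disc-to-square formulas. -/
theorem fg_squircular_right_inverse
    (u v x y : ℝ)
    (hd : u ^ 2 + v ^ 2 ≤ 1) (hu0 : u ≠ 0) (hv0 : v ≠ 0)
    (hx : x = Real.sign (u * v) / (v * Real.sqrt 2) *
      Real.sqrt (u ^ 2 + v ^ 2 -
        Real.sqrt ((u ^ 2 + v ^ 2) * (u ^ 2 + v ^ 2 - 4 * u ^ 2 * v ^ 2))))
    (hy : y = Real.sign (u * v) / (u * Real.sqrt 2) *
      Real.sqrt (u ^ 2 + v ^ 2 -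
        Real.sqrt ((u ^ 2 + v ^ 2) * (u ^ 2 + v ^ 2 - 4 * u ^ 2 * v ^ 2)))) :
    (x, y) ≠ (0, 0) ∧
    x * Real.sqrt (x ^ 2 + y ^ 2 - x ^ 2 * y ^ 2) / Real.sqrt (x ^ 2 + y ^ 2) = u ∧
    y * Real.sqrt (x ^ 2 + y ^ 2 - x ^ 2 * y ^ 2) / Real.sqrt (x ^ 2 + y ^ 2) = v := by
  have hu2 : 0 < u ^ 2 := by positivity
  have hv2 : 0 < v ^ 2 := by positivity
  have huv : u * v ≠ 0 := mul_ne_zero hu0 hv0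
  have hs : 0 < u ^ 2 + v ^ 2 := by positivity
  have hD : 0 ≤ (u ^ 2 + v ^ 2) * (u ^ 2 + v ^ 2 - 4 * u ^ 2 * v ^ 2) := by
    apply mul_nonneg hs.le
    nlinarith [sq_nonneg (u ^ 2 - v ^ 2)]
  have hr2 := Real.sq_sqrt hD
  have hr0 := Real.sqrt_nonneg ((u ^ 2 + v ^ 2) * (u ^ 2 + v ^ 2 - 4 * u ^ 2 * v ^ 2))
  generalize Real.sqrt ((u ^ 2 + v ^ 2) * (u ^ 2 + v ^ 2 - 4 * u ^ 2 * v ^ 2)) = r at *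
  have hrs : r < u ^ 2 + v ^ 2 := by
    apply lt_of_pow_lt_pow_left₀ 2 hs.le
    rw [hr2]
    nlinarith [mul_pos hs (mul_pos hu2 hv2)]
  have hq : 0 < u ^ 2 + v ^ 2 - r := by linarith
  have hw2 := Real.sq_sqrt hq.le
  have hw0 := Real.sqrt_pos.2 hq
  generalize Real.sqrt (u ^ 2 + v ^ 2 - r) = w at *
  have h2 : (Real.sqrt 2) ^ 2 = 2 := Real.sq_sqrt (by norm_num)
  have h20 : 0 < Real.sqrt 2 := Real.sqrt_pos.2 (by norm_num)
  generalize Real.sqrt 2 = c at *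
  obtain ⟨t, ht0, htx, hty, ht2⟩ : ∃ t : ℝ, 0 < t ∧ x = t * u ∧ y = t * v ∧
      t ^ 2 * (2 * u ^ 2 * v ^ 2) = w ^ 2 := by
    refine ⟨w / (|u * v| * c), by positivity, ?_, ?_, ?_⟩
    · rcases lt_or_gt_of_ne huv with h | h
      · rw [hx, Real.sign_of_neg h, abs_of_neg h]; field_simp
      · rw [hx, Real.sign_of_pos h, abs_of_pos h]; field_simp
    · rcases lt_or_gt_of_ne huv with h | h
      · rw [hy, Real.sign_of_neg h, abs_of_neg h]; field_simp
      · rw [hy, Real.sign_of_pos h, abs_of_pos h]; field_simp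
    · rw [div_pow, mul_pow, sq_abs, h2]; field_simp
  have e1 : x ^ 2 + y ^ 2 = t ^ 2 * (u ^ 2 + v ^ 2) := by rw [htx, hty]; ring
  have e2 : x ^ 2 + y ^ 2 - x ^ 2 * y ^ 2 = u ^ 2 + v ^ 2 := by
    have hne : (4 * u ^ 2 * v ^ 2) ≠ 0 := by positivity
    apply mul_right_cancel₀ hne
    have e3 : (x ^ 2 + y ^ 2 - x ^ 2 * y ^ 2) * (4 * u ^ 2 * v ^ 2) =
        2 * (t ^ 2 * (2 * u ^ 2 * v ^ 2)) * (u ^ 2 + v ^ 2)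
          - (t ^ 2 * (2 * u ^ 2 * v ^ 2)) ^ 2 := by
      rw [htx, hty]; ring
    rw [e3, ht2, hw2]
    linear_combination -hr2
  have e4 : Real.sqrt (x ^ 2 + y ^ 2) = t * Real.sqrt (u ^ 2 + v ^ 2) := by
    rw [e1, Real.sqrt_mul (sq_nonneg t), Real.sqrt_sq ht0.le]
  have hS := Real.sqrt_pos.2 hs
  rw [e2, e4]
  refine ⟨?_, ?_, ?_⟩
  · intro h
    have h1 : x = 0 := (Prod.mk.inj h).1
    rw [htx] at h1
    exact (mul_ne_zero ht0.ne' hu0) h1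
  · rw [htx]; field_simp
  · rw [hty]; field_simp
end

section
/- Let (x,y) ∈ [-1,1] × [-1,1] and define u = x·√(1 − y²/2) and v = y·√(1 − x²/2). Then the trigonometrically derived inverse formulas recover (x,y): (1/2)·√(2 + u² − v² + 2√2·u) − (1/2)·√(2 + u² − v² − 2√2·u) = x and (1/2)·√(2 − u² + v² + 2√2·v) − (1/2)·√(2 − u² + v² − 2√2·v) = y. In particular all four radicands 2 ± (u² − v²) ± 2√2·u (resp. v) are nonnegative. -/
/-- One coordinate of the inversion: the radicands are perfect squares. -/
theorem elliptical_aux (x y u D : ℝ)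
    (hx : x ∈ Set.Icc (-1 : ℝ) 1) (hy : y ∈ Set.Icc (-1 : ℝ) 1)
    (hu : u = x * Real.sqrt (1 - y ^ 2 / 2)) (hD : D = 2 + x ^ 2 - y ^ 2) :
    0 ≤ D + 2 * Real.sqrt 2 * u ∧ 0 ≤ D - 2 * Real.sqrt 2 * u ∧
    (1 / 2) * Real.sqrt (D + 2 * Real.sqrt 2 * u) -
      (1 / 2) * Real.sqrt (D - 2 * Real.sqrt 2 * u) = x := by
  obtain ⟨hx1, hx2⟩ := hx
  obtain ⟨hy1, hy2⟩ := hy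
  have hs : Real.sqrt (1 - y ^ 2 / 2) ^ 2 = 1 - y ^ 2 / 2 :=
    Real.sq_sqrt (by nlinarith)
  have h2 : Real.sqrt 2 ^ 2 = 2 := Real.sq_sqrt (by norm_num)
  have ht0 : 0 ≤ Real.sqrt 2 * Real.sqrt (1 - y ^ 2 / 2) := by positivity
  have ht : (Real.sqrt 2 * Real.sqrt (1 - y ^ 2 / 2)) ^ 2 = 2 - y ^ 2 := by
    rw [mul_pow, hs, h2]; ring
  have hux : Real.sqrt 2 * u = x * (Real.sqrt 2 * Real.sqrt (1 - y ^ 2 / 2)) := by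
    rw [hu]; ring
  generalize Real.sqrt 2 * Real.sqrt (1 - y ^ 2 / 2) = t at *
  have ht1 : 1 ≤ t := by nlinarith
  have e1 : D + 2 * Real.sqrt 2 * u = (t + x) ^ 2 := by
    rw [hD]; linear_combination 2 * hux - ht
  have e2 : D - 2 * Real.sqrt 2 * u = (t - x) ^ 2 := by
    rw [hD]; linear_combination -2 * hux - ht
  rw [e1, e2, Real.sqrt_sq (by linarith), Real.sqrt_sq (by linarith)]
  exact ⟨by positivity, by positivity, by ring⟩

/-- The trigonometrically derived inverse formulas of the Elliptical Grid
map recover the point of the square. -/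
theorem elliptical_grid_trig_inverse
    (x y u v : ℝ)
    (hx : x ∈ Set.Icc (-1 : ℝ) 1) (hy : y ∈ Set.Icc (-1 : ℝ) 1)
    (hu : u = x * Real.sqrt (1 - y ^ 2 / 2))
    (hv : v = y * Real.sqrt (1 - x ^ 2 / 2)) :
    0 ≤ 2 + u ^ 2 - v ^ 2 + 2 * Real.sqrt 2 * u ∧
    0 ≤ 2 + u ^ 2 - v ^ 2 - 2 * Real.sqrt 2 * u ∧
    0 ≤ 2 - u ^ 2 + v ^ 2 + 2 * Real.sqrt 2 * v ∧
    0 ≤ 2 - u ^ 2 + v ^ 2 - 2 * Real.sqrt 2 * v ∧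
    (1 / 2) * Real.sqrt (2 + u ^ 2 - v ^ 2 + 2 * Real.sqrt 2 * u) -
      (1 / 2) * Real.sqrt (2 + u ^ 2 - v ^ 2 - 2 * Real.sqrt 2 * u) = x ∧
    (1 / 2) * Real.sqrt (2 - u ^ 2 + v ^ 2 + 2 * Real.sqrt 2 * v) -
      (1 / 2) * Real.sqrt (2 - u ^ 2 + v ^ 2 - 2 * Real.sqrt 2 * v) = y := by
  have hu2 : u ^ 2 = x ^ 2 * (1 - y ^ 2 / 2) := by
    rw [hu, mul_pow, Real.sq_sqrt]
    nlinarith [hy.1, hy.2]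
  have hv2 : v ^ 2 = y ^ 2 * (1 - x ^ 2 / 2) := by
    rw [hv, mul_pow, Real.sq_sqrt]
    nlinarith [hx.1, hx.2]
  obtain ⟨a1, a2, a3⟩ := elliptical_aux x y u (2 + u ^ 2 - v ^ 2) hx hy hu
    (by rw [hu2, hv2]; ring)
  obtain ⟨b1, b2, b3⟩ := elliptical_aux y x v (2 - u ^ 2 + v ^ 2) hy hx hv
    (by rw [hu2, hv2]; ring)
  exact ⟨a1, a2, b1, b2, a3, b3⟩
end

section
/- Let (x,y) ∈ [-1,1] × [-1,1] and define u = x·√(1 − y²/2) and v = y·√(1 − x²/2). Then the biquadratic-derived inverse formulas recover (x,y): sgn(u)/√2 · √(2 + u² − v² − √((2 + u² − v²)² − 8u²)) = x and sgn(v)/√2 · √(2 − u² + v² − √((2 − u² + v²)² − 8v²)) = y. In particular (2 + u² − v²)² − 8u² ≥ 0 and (2 − u² + v²)² − 8v² ≥ 0. -/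
theorem sign_aux (x s : ℝ) (hs : 0 < s) :
    Real.sign (x * s) / Real.sqrt 2 * Real.sqrt (2 * x ^ 2) = x := by
  have h2 : Real.sqrt 2 ≠ 0 := by positivity
  rw [Real.sqrt_mul (by norm_num), Real.sqrt_sq_eq_abs]
  rcases lt_trichotomy x 0 with h | h | h
  · rw [Real.sign_of_neg (mul_neg_of_neg_of_pos h hs), abs_of_neg h]
    field_simp
  · simp [h]
  · rw [Real.sign_of_pos (mul_pos h hs), abs_of_pos h]
    field_simp

/-- The biquadratic-derived inverse formulas of the Elliptical Grid map
recover the point of the square. -/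
theorem elliptical_grid_biquadratic_inverse
    (x y u v : ℝ)
    (hx : x ∈ Set.Icc (-1 : ℝ) 1) (hy : y ∈ Set.Icc (-1 : ℝ) 1)
    (hu : u = x * Real.sqrt (1 - y ^ 2 / 2))
    (hv : v = y * Real.sqrt (1 - x ^ 2 / 2)) :
    (2 + u ^ 2 - v ^ 2) ^ 2 - 8 * u ^ 2 ≥ 0 ∧
    (2 - u ^ 2 + v ^ 2) ^ 2 - 8 * v ^ 2 ≥ 0 ∧
    Real.sign u / Real.sqrt 2 *
      Real.sqrt (2 + u ^ 2 - v ^ 2 -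
        Real.sqrt ((2 + u ^ 2 - v ^ 2) ^ 2 - 8 * u ^ 2)) = x ∧
    Real.sign v / Real.sqrt 2 *
      Real.sqrt (2 - u ^ 2 + v ^ 2 -
        Real.sqrt ((2 - u ^ 2 + v ^ 2) ^ 2 - 8 * v ^ 2)) = y := by
  obtain ⟨hx1, hx2⟩ := hx
  obtain ⟨hy1, hy2⟩ := hy
  have hxs : x ^ 2 ≤ 1 := by nlinarith
  have hys : y ^ 2 ≤ 1 := by nlinarith
  have hu2 : u ^ 2 = x ^ 2 * (1 - y ^ 2 / 2) := by
    rw [hu, mul_pow, Real.sq_sqrt (by linarith)]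
  have hv2 : v ^ 2 = y ^ 2 * (1 - x ^ 2 / 2) := by
    rw [hv, mul_pow, Real.sq_sqrt (by linarith)]
  have e1 : (2 + u ^ 2 - v ^ 2) ^ 2 - 8 * u ^ 2 = (2 - x ^ 2 - y ^ 2) ^ 2 := by
    rw [hu2, hv2]; ring
  have e2 : (2 - u ^ 2 + v ^ 2) ^ 2 - 8 * v ^ 2 = (2 - x ^ 2 - y ^ 2) ^ 2 := by
    rw [hu2, hv2]; ring
  have f1 : 2 + u ^ 2 - v ^ 2 - (2 - x ^ 2 - y ^ 2) = 2 * x ^ 2 := by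
    rw [hu2, hv2]; ring
  have f2 : 2 - u ^ 2 + v ^ 2 - (2 - x ^ 2 - y ^ 2) = 2 * y ^ 2 := by
    rw [hu2, hv2]; ring
  rw [e1, e2, Real.sqrt_sq (by linarith), f1, f2, hu, hv]
  exact ⟨sq_nonneg _, sq_nonneg _, sign_aux _ _ (Real.sqrt_pos.2 (by linarith)),
    sign_aux _ _ (Real.sqrt_pos.2 (by linarith))⟩
end

section
/- Let (u,v) ∈ ℝ² with u² + v² ≤ 1. Then the two forms of the Elliptical Grid disc-to-square inverse agree: (1/2)·√(2 + u² − v² + 2√2·u) − (1/2)·√(2 + u² − v² − 2√2·u) = sgn(u)/√2 · √(2 + u² − v² − √((2 + u² − v²)² − 8u²)), and the analogous identity with the roles of u and v (and of the signs of u², v²) exchanged: (1/2)·√(2 − u² + v² + 2√2·v) − (1/2)·√(2 − u² + v² − 2√2·v) = sgn(v)/√2 · √(2 − u² + v² − √((2 − u² + v²)² − 8v²)). In particular all radicands appearing are nonnegative on the disc. -/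
theorem egrid_radicand (u v : ℝ) (hd : u ^ 2 + v ^ 2 ≤ 1) :
    0 ≤ 2 + u ^ 2 - v ^ 2 + 2 * Real.sqrt 2 * u ∧
    0 ≤ 2 + u ^ 2 - v ^ 2 - 2 * Real.sqrt 2 * u := by
  have h2 : Real.sqrt 2 ^ 2 = 2 := Real.sq_sqrt (by norm_num)
  have e : (Real.sqrt 2 * u) ^ 2 = 2 * u ^ 2 := by rw [mul_pow, h2]
  constructor
  · nlinarith [sq_nonneg (1 + Real.sqrt 2 * u)]
  · nlinarith [sq_nonneg (1 - Real.sqrt 2 * u)]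

theorem egrid_aux (A u : ℝ) (h1 : 0 ≤ A + 2 * Real.sqrt 2 * u)
    (h2 : 0 ≤ A - 2 * Real.sqrt 2 * u) :
    0 ≤ A ^ 2 - 8 * u ^ 2 ∧
    (1 / 2) * Real.sqrt (A + 2 * Real.sqrt 2 * u) -
      (1 / 2) * Real.sqrt (A - 2 * Real.sqrt 2 * u) =
    Real.sign u / Real.sqrt 2 * Real.sqrt (A - Real.sqrt (A ^ 2 - 8 * u ^ 2)) := by
  have hs : Real.sqrt 2 ^ 2 = 2 := Real.sq_sqrt (by norm_num)
  have hs0 : 0 < Real.sqrt 2 := by positivity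
  have hf : A ^ 2 - 8 * u ^ 2 = (A + 2 * Real.sqrt 2 * u) * (A - 2 * Real.sqrt 2 * u) := by
    linear_combination 4 * u ^ 2 * hs
  refine ⟨hf ▸ mul_nonneg h1 h2, ?_⟩
  rw [hf, Real.sqrt_mul h1]
  have hp := Real.sq_sqrt h1
  have hq := Real.sq_sqrt h2
  have key : A - Real.sqrt (A + 2 * Real.sqrt 2 * u) * Real.sqrt (A - 2 * Real.sqrt 2 * u)
      = (Real.sqrt (A + 2 * Real.sqrt 2 * u) - Real.sqrt (A - 2 * Real.sqrt 2 * u)) ^ 2 / 2 := by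
    linear_combination (-1 / 2) * hp - (1 / 2) * hq
  rw [key, Real.sqrt_div (sq_nonneg _), Real.sqrt_sq_eq_abs]
  rcases lt_trichotomy u 0 with hu | hu | hu
  · have hle : Real.sqrt (A + 2 * Real.sqrt 2 * u) ≤ Real.sqrt (A - 2 * Real.sqrt 2 * u) :=
      Real.sqrt_le_sqrt (by nlinarith)
    rw [Real.sign_of_neg hu, abs_of_nonpos (by linarith), div_mul_div_comm, ← sq, hs]
    ring
  · subst hu
    simp
  · have hle : Real.sqrt (A - 2 * Real.sqrt 2 * u) ≤ Real.sqrt (A + 2 * Real.sqrt 2 * u) :=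
      Real.sqrt_le_sqrt (by nlinarith)
    rw [Real.sign_of_pos hu, abs_of_nonneg (by linarith), div_mul_div_comm, ← sq, hs]
    ring

/-- On the closed unit disc, the trigonometric and biquadratic forms of the
Elliptical Grid disc-to-square inverse agree, and all radicands appearing
are nonnegative. -/
theorem elliptical_grid_inverse_forms_agree
    (u v : ℝ) (hd : u ^ 2 + v ^ 2 ≤ 1) :
    0 ≤ 2 + u ^ 2 - v ^ 2 + 2 * Real.sqrt 2 * u ∧
    0 ≤ 2 + u ^ 2 - v ^ 2 - 2 * Real.sqrt 2 * u ∧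
    0 ≤ 2 - u ^ 2 + v ^ 2 + 2 * Real.sqrt 2 * v ∧
    0 ≤ 2 - u ^ 2 + v ^ 2 - 2 * Real.sqrt 2 * v ∧
    0 ≤ (2 + u ^ 2 - v ^ 2) ^ 2 - 8 * u ^ 2 ∧
    0 ≤ (2 - u ^ 2 + v ^ 2) ^ 2 - 8 * v ^ 2 ∧
    (1 / 2) * Real.sqrt (2 + u ^ 2 - v ^ 2 + 2 * Real.sqrt 2 * u) -
      (1 / 2) * Real.sqrt (2 + u ^ 2 - v ^ 2 - 2 * Real.sqrt 2 * u) =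
    Real.sign u / Real.sqrt 2 *
      Real.sqrt (2 + u ^ 2 - v ^ 2 -
        Real.sqrt ((2 + u ^ 2 - v ^ 2) ^ 2 - 8 * u ^ 2)) ∧
    (1 / 2) * Real.sqrt (2 - u ^ 2 + v ^ 2 + 2 * Real.sqrt 2 * v) -
      (1 / 2) * Real.sqrt (2 - u ^ 2 + v ^ 2 - 2 * Real.sqrt 2 * v) =
    Real.sign v / Real.sqrt 2 *
      Real.sqrt (2 - u ^ 2 + v ^ 2 -
        Real.sqrt ((2 - u ^ 2 + v ^ 2) ^ 2 - 8 * v ^ 2)) := by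
  obtain ⟨a1, a2⟩ := egrid_radicand u v hd
  obtain ⟨b1, b2⟩ := egrid_radicand v u (by linarith)
  have e : 2 + v ^ 2 - u ^ 2 = 2 - u ^ 2 + v ^ 2 := by ring
  rw [e] at b1 b2
  obtain ⟨c1, c2⟩ := egrid_aux _ u a1 a2
  obtain ⟨d1, d2⟩ := egrid_aux _ v b1 b2
  exact ⟨a1, a2, b1, b2, c1, d1, c2, d2⟩
end

section
/- Let (x,y) ∈ [-1,1] × [-1,1] with (x,y) ≠ (0,0), and define (u,v) by the Simple Stretching square-to-disc map: u = sgn(x)·x²/√(x² + y²) and v = sgn(x)·x·y/√(x² + y²) when x² ≥ y², and u = sgn(y)·x·y/√(x² + y²) and v = sgn(y)·y²/√(x² + y²) when x² < y². Then the map is radial (u·y = v·x) and it sends the Euclidean norm of the image to the Chebyshev norm of the source: √(u² + v²) = max(|x|, |y|); in particular u² + v² ≤ 1. -/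
theorem sign_sq_aux (t : ℝ) (ht : t ≠ 0) : Real.sign t ^ 2 = 1 := by
  rcases lt_or_gt_of_ne ht with h | h
  · rw [Real.sign_of_neg h]; norm_num
  · rw [Real.sign_of_pos h]; norm_num

/-- The Simple Stretching square-to-disc map is radial and sends the
Euclidean norm of the image to the Chebyshev norm of the source. -/
theorem simple_stretching_radial_norm
    (x y u v : ℝ)
    (hx : x ∈ Set.Icc (-1 : ℝ) 1) (hy : y ∈ Set.Icc (-1 : ℝ) 1)
    (hne : (x, y) ≠ (0, 0))
    (hu : u = if x ^ 2 ≥ y ^ 2 then Real.sign x * x ^ 2 / Real.sqrt (x ^ 2 + y ^ 2)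
              else Real.sign y * (x * y) / Real.sqrt (x ^ 2 + y ^ 2))
    (hv : v = if x ^ 2 ≥ y ^ 2 then Real.sign x * (x * y) / Real.sqrt (x ^ 2 + y ^ 2)
              else Real.sign y * y ^ 2 / Real.sqrt (x ^ 2 + y ^ 2)) :
    u * y = v * x ∧ Real.sqrt (u ^ 2 + v ^ 2) = max |x| |y| ∧ u ^ 2 + v ^ 2 ≤ 1 := by
  obtain ⟨hx1, hx2⟩ := hx
  obtain ⟨hy1, hy2⟩ := hy
  by_cases h : x ^ 2 ≥ y ^ 2
  · rw [if_pos h] at hu hv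
    have hx0 : x ≠ 0 := by
      rintro rfl
      apply hne
      have : y = 0 := by nlinarith
      rw [this]
    have hpos : 0 < x ^ 2 + y ^ 2 := by positivity
    have hr := Real.sq_sqrt hpos.le
    have key : u ^ 2 + v ^ 2 = x ^ 2 := by
      rw [hu, hv, div_pow, div_pow, hr, mul_pow, mul_pow, sign_sq_aux x hx0]
      field_simp
    refine ⟨by rw [hu, hv]; ring, ?_, by rw [key]; nlinarith⟩
    rw [key, Real.sqrt_sq_eq_abs, max_eq_left (sq_le_sq.mp h)]
  · rw [if_neg h] at hu hv
    push Not at h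
    have hy0 : y ≠ 0 := by
      rintro rfl
      nlinarith
    have hpos : 0 < x ^ 2 + y ^ 2 := by positivity
    have hr := Real.sq_sqrt hpos.le
    have key : u ^ 2 + v ^ 2 = y ^ 2 := by
      rw [hu, hv, div_pow, div_pow, hr, mul_pow, mul_pow, mul_pow, sign_sq_aux y hy0]
      field_simp
    refine ⟨by rw [hu, hv]; ring, ?_, by rw [key]; nlinarith⟩
    rw [key, Real.sqrt_sq_eq_abs, max_eq_right (sq_le_sq.mp h.le)]
end

section
/- Let (u,v) ∈ ℝ² with 0 < u² + v² ≤ 1, and define (x,y) by the Simple Stretching disc-to-square map: x = sgn(u)·√(u² + v²) and y = sgn(u)·(v/u)·√(u² + v²) when u² ≥ v², and x = sgn(v)·(u/v)·√(u² + v²) and y = sgn(v)·√(u² + v²) when u² < v². Then (x,y) ∈ [-1,1] × [-1,1], and applying the Simple Stretching square-to-disc map to (x,y) recovers (u,v): if x² ≥ y² then sgn(x)·x²/√(x² + y²) = u and sgn(x)·x·y/√(x² + y²) = v, and if x² < y² then sgn(y)·x·y/√(x² + y²) = u and sgn(y)·y²/√(x² + y²) = v. -/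
theorem stretch_core (a b X Y : ℝ) (ha : a ≠ 0) (hab : b ^ 2 ≤ a ^ 2)
    (hd1 : a ^ 2 + b ^ 2 ≤ 1)
    (hX : X = Real.sign a * Real.sqrt (a ^ 2 + b ^ 2))
    (hY : Y = Real.sign a * (b / a) * Real.sqrt (a ^ 2 + b ^ 2)) :
    X ∈ Set.Icc (-1 : ℝ) 1 ∧ Y ∈ Set.Icc (-1 : ℝ) 1 ∧ Y ^ 2 ≤ X ^ 2 ∧
    (b ^ 2 < a ^ 2 → Y ^ 2 < X ^ 2) ∧
    Real.sign X * X ^ 2 / Real.sqrt (X ^ 2 + Y ^ 2) = a ∧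
    Real.sign X * (X * Y) / Real.sqrt (X ^ 2 + Y ^ 2) = b := by
  have ha2 : 0 < a ^ 2 := by positivity
  have hpos : 0 < a ^ 2 + b ^ 2 := by positivity
  obtain ⟨r, hr⟩ : ∃ r, r = Real.sqrt (a ^ 2 + b ^ 2) := ⟨_, rfl⟩
  have hr0 : 0 < r := hr ▸ Real.sqrt_pos.2 hpos
  have hr2 : r ^ 2 = a ^ 2 + b ^ 2 := by rw [hr]; exact Real.sq_sqrt hpos.le
  rw [← hr] at hX hY
  obtain ⟨s, hs⟩ : ∃ s, s = Real.sign a := ⟨_, rfl⟩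
  rw [← hs] at hX hY
  have hs2 : s ^ 2 = 1 ∧ 0 < s * a ∧ Real.sign X = s := by
    rcases lt_or_gt_of_ne ha with h | h
    · rw [Real.sign_of_neg h] at hs
      subst hs
      exact ⟨by norm_num, by linarith, Real.sign_of_neg (by linarith)⟩
    · rw [Real.sign_of_pos h] at hs
      subst hs
      exact ⟨by norm_num, by linarith, Real.sign_of_pos (by linarith)⟩
  obtain ⟨hss, hsa, hsX⟩ := hs2
  have hX2 : X ^ 2 = r ^ 2 := by rw [hX, mul_pow, hss, one_mul]
  have hYX : Y * a = b * X := by rw [hX, hY]; field_simp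
  have hY2 : Y ^ 2 * a ^ 2 = b ^ 2 * r ^ 2 := by
    rw [← hX2, ← mul_pow, ← mul_pow, hYX]
  have hle : Y ^ 2 ≤ X ^ 2 := by
    refine le_of_mul_le_mul_right ?_ ha2
    rw [hY2, hX2, mul_comm]
    exact mul_le_mul_of_nonneg_left hab (by positivity)
  have hsq : Real.sqrt (X ^ 2 + Y ^ 2) = r ^ 2 / (s * a) := by
    rw [Real.sqrt_eq_iff_eq_sq (by positivity) (by positivity), div_pow, mul_pow, hss, one_mul, eq_div_iff ha2.ne']
    rw [add_mul, hY2, hX2]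
    linear_combination -r ^ 2 * hr2
  have hX1 : X ^ 2 ≤ 1 := by linarith
  refine ⟨abs_le.1 (abs_le_one_iff_mul_self_le_one.2 (by nlinarith)),
    abs_le.1 (abs_le_one_iff_mul_self_le_one.2 (by nlinarith)), hle, ?_, ?_, ?_⟩
  · intro h
    refine lt_of_mul_lt_mul_right ?_ ha2.le
    rw [hY2, hX2, mul_comm]
    exact mul_lt_mul_of_pos_left h (by positivity)
  · rw [hsq, hsX, hX2, div_eq_iff (by positivity)]
    have := hsa.ne'
    rw [mul_div_assoc', eq_div_iff this]
    linear_combination r ^ 2 * a * hss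
  · rw [hsq, hsX, div_eq_iff (by positivity), mul_div_assoc', eq_div_iff hsa.ne']
    linear_combination s ^ 2 * X * hYX + b * s ^ 2 * hX2 + b * r ^ 2 * hss

/-- The Simple Stretching disc-to-square map lands in the square and is a
right inverse of the Simple Stretching square-to-disc map. -/
theorem simple_stretching_right_inverse
    (u v x y : ℝ)
    (hd0 : 0 < u ^ 2 + v ^ 2) (hd1 : u ^ 2 + v ^ 2 ≤ 1)
    (hx : x = if u ^ 2 ≥ v ^ 2 then Real.sign u * Real.sqrt (u ^ 2 + v ^ 2)
              else Real.sign v * (u / v) * Real.sqrt (u ^ 2 + v ^ 2))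
    (hy : y = if u ^ 2 ≥ v ^ 2 then Real.sign u * (v / u) * Real.sqrt (u ^ 2 + v ^ 2)
              else Real.sign v * Real.sqrt (u ^ 2 + v ^ 2)) :
    x ∈ Set.Icc (-1 : ℝ) 1 ∧ y ∈ Set.Icc (-1 : ℝ) 1 ∧
    (x ^ 2 ≥ y ^ 2 →
      Real.sign x * x ^ 2 / Real.sqrt (x ^ 2 + y ^ 2) = u ∧
      Real.sign x * (x * y) / Real.sqrt (x ^ 2 + y ^ 2) = v) ∧
    (x ^ 2 < y ^ 2 →
      Real.sign y * (x * y) / Real.sqrt (x ^ 2 + y ^ 2) = u ∧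
      Real.sign y * y ^ 2 / Real.sqrt (x ^ 2 + y ^ 2) = v) := by
  by_cases h : u ^ 2 ≥ v ^ 2
  · rw [if_pos h] at hx hy
    have hu : u ≠ 0 := by
      rintro rfl
      nlinarith
    obtain ⟨h1, h2, h3, -, h5, h6⟩ := stretch_core u v x y hu h hd1 hx hy
    exact ⟨h1, h2, fun _ => ⟨h5, h6⟩, fun h' => absurd h' (not_lt.2 h3)⟩
  · rw [if_neg h] at hx hy
    have h' : u ^ 2 < v ^ 2 := not_le.1 h
    have hv : v ≠ 0 := by
      rintro rfl
      nlinarith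
    rw [add_comm (u ^ 2)] at hx hy hd1
    obtain ⟨h1, h2, -, h4, h5, h6⟩ := stretch_core v u y x hv h'.le hd1 hy hx
    rw [add_comm (y ^ 2)] at h5 h6
    rw [mul_comm y x] at h6
    exact ⟨h2, h1, fun hh => absurd (h4 h') (not_lt.2 hh), fun _ => ⟨h6, h5⟩⟩
end

section
/- For all (x,y) ∈ [-1,1] × [-1,1] one has 0 ≤ x² + y² − x²y² ≤ 1, and equality x² + y² − x²y² = 1 holds if and only if |x| = 1 or |y| = 1. Consequently every point of the square lies on exactly one shrunken Fernández-Guasti squircle x² + y² − x²y² = t² with t = √(x² + y² − x²y²) ∈ [0,1], and the contour t = 1 is exactly the boundary of the square. -/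
/-- Every point of the square lies on exactly one shrunken FG-squircle
x² + y² − x²y² = t² with t ∈ [0,1], and the contour t = 1 is exactly the
boundary of the square. -/
theorem squircular_continuum_of_square
    (x y : ℝ) (hx : x ∈ Set.Icc (-1 : ℝ) 1) (hy : y ∈ Set.Icc (-1 : ℝ) 1) :
    0 ≤ x ^ 2 + y ^ 2 - x ^ 2 * y ^ 2 ∧
    x ^ 2 + y ^ 2 - x ^ 2 * y ^ 2 ≤ 1 ∧
    (x ^ 2 + y ^ 2 - x ^ 2 * y ^ 2 = 1 ↔ |x| = 1 ∨ |y| = 1) ∧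
    (∃! t : ℝ, t ∈ Set.Icc (0 : ℝ) 1 ∧ x ^ 2 + y ^ 2 - x ^ 2 * y ^ 2 = t ^ 2) ∧
    Real.sqrt (x ^ 2 + y ^ 2 - x ^ 2 * y ^ 2) ∈ Set.Icc (0 : ℝ) 1 ∧
    x ^ 2 + y ^ 2 - x ^ 2 * y ^ 2 =
      (Real.sqrt (x ^ 2 + y ^ 2 - x ^ 2 * y ^ 2)) ^ 2 := by
  have hx2 : x ^ 2 ≤ 1 := by nlinarith [hx.1, hx.2]
  have hy2 : y ^ 2 ≤ 1 := by nlinarith [hy.1, hy.2]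
  have h0 : 0 ≤ x ^ 2 + y ^ 2 - x ^ 2 * y ^ 2 := by
    nlinarith [mul_nonneg (sq_nonneg x) (sub_nonneg.2 hy2), sq_nonneg y]
  have h1 : x ^ 2 + y ^ 2 - x ^ 2 * y ^ 2 ≤ 1 := by
    nlinarith [mul_nonneg (sub_nonneg.2 hx2) (sub_nonneg.2 hy2)]
  have habs : ∀ z : ℝ, |z| = 1 ↔ 1 - z ^ 2 = 0 := by
    intro z
    rw [← sq_abs z]
    constructor
    · intro h
      rw [h]; norm_num
    · intro h
      nlinarith [abs_nonneg z]
  have hs : Real.sqrt (x ^ 2 + y ^ 2 - x ^ 2 * y ^ 2) ∈ Set.Icc (0 : ℝ) 1 :=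
    ⟨Real.sqrt_nonneg _, Real.sqrt_le_one.mpr h1⟩
  have he := (Real.sq_sqrt h0).symm
  refine ⟨h0, h1, ?_, ⟨_, ⟨hs, he⟩, ?_⟩, hs, he⟩
  · rw [habs, habs, ← mul_eq_zero]
    constructor <;> intro h <;> linarith
  · rintro t ⟨ht, h⟩
    rw [h, Real.sqrt_sq ht.1]
end

section
/- Let (x,y) ∈ [-1,1] × [-1,1] with x ≠ 0 and y ≠ 0, and define u = x/√(1 + x²y²) and v = y/√(1 + x²y²). Then 1 − 4u²v² ≥ 0 and the 2-Squircular disc-to-square formulas recover (x,y): sgn(u·v)/(v·√2) · √(1 − √(1 − 4u²v²)) = x and sgn(u·v)/(u·√2) · √(1 − √(1 − 4u²v²)) = y. -/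
/-- The 2-Squircular disc-to-square formulas invert the square-to-disc map. -/
theorem two_squircular_left_inverse
    (x y u v : ℝ)
    (hx : x ∈ Set.Icc (-1 : ℝ) 1) (hy : y ∈ Set.Icc (-1 : ℝ) 1)
    (hx0 : x ≠ 0) (hy0 : y ≠ 0)
    (hu : u = x / Real.sqrt (1 + x ^ 2 * y ^ 2))
    (hv : v = y / Real.sqrt (1 + x ^ 2 * y ^ 2)) :
    1 - 4 * u ^ 2 * v ^ 2 ≥ 0 ∧
    Real.sign (u * v) / (v * Real.sqrt 2) *
      Real.sqrt (1 - Real.sqrt (1 - 4 * u ^ 2 * v ^ 2)) = x ∧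
    Real.sign (u * v) / (u * Real.sqrt 2) *
      Real.sqrt (1 - Real.sqrt (1 - 4 * u ^ 2 * v ^ 2)) = y := by
  have hpos : 0 < 1 + x ^ 2 * y ^ 2 := by positivity
  have hs : 0 < Real.sqrt (1 + x ^ 2 * y ^ 2) := Real.sqrt_pos.mpr hpos
  have hs2 : Real.sqrt (1 + x ^ 2 * y ^ 2) ^ 2 = 1 + x ^ 2 * y ^ 2 := Real.sq_sqrt hpos.le
  generalize Real.sqrt (1 + x ^ 2 * y ^ 2) = s at *
  have hx2 : x ^ 2 ≤ 1 := by nlinarith [hx.1, hx.2]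
  have hy2 : y ^ 2 ≤ 1 := by nlinarith [hy.1, hy.2]
  have ht : x ^ 2 * y ^ 2 ≤ 1 := by nlinarith [sq_nonneg x, sq_nonneg y]
  have h1 : 1 - 4 * u ^ 2 * v ^ 2 = ((1 - x ^ 2 * y ^ 2) / (1 + x ^ 2 * y ^ 2)) ^ 2 := by
    rw [hu, hv, div_pow, div_pow, hs2]
    field_simp
    ring
  have h2 : Real.sqrt (1 - 4 * u ^ 2 * v ^ 2) = (1 - x ^ 2 * y ^ 2) / (1 + x ^ 2 * y ^ 2) := by
    rw [h1, Real.sqrt_sq (div_nonneg (by linarith) hpos.le)]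
  have h3 : 1 - Real.sqrt (1 - 4 * u ^ 2 * v ^ 2) = 2 * (|x * y| / s) ^ 2 := by
    rw [h2, div_pow, sq_abs, hs2]
    field_simp
    ring
  have h4 : Real.sqrt (1 - Real.sqrt (1 - 4 * u ^ 2 * v ^ 2)) = Real.sqrt 2 * (|x * y| / s) := by
    rw [h3, Real.sqrt_mul (by norm_num), Real.sqrt_sq (by positivity)]
  have huv : u * v = x * y / s ^ 2 := by
    rw [hu, hv]
    field_simp
  have h5 : Real.sign (u * v) * |x * y| = x * y := by
    rcases lt_or_gt_of_ne (mul_ne_zero hx0 hy0) with h | h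
    · rw [huv, Real.sign_of_neg (div_neg_of_neg_of_pos h (by positivity)), abs_of_neg h]
      ring
    · rw [huv, Real.sign_of_pos (div_pos h (by positivity)), abs_of_pos h]
      ring
  have h6 : Real.sqrt 2 ≠ 0 := by positivity
  refine ⟨by rw [h1]; positivity, ?_, ?_⟩
  · rw [h4]
    have : Real.sign (u * v) / (v * Real.sqrt 2) * (Real.sqrt 2 * (|x * y| / s))
        = (Real.sign (u * v) * |x * y|) * (Real.sqrt 2 / Real.sqrt 2) / (v * s) := by
      ring
    rw [this, h5, hv, div_self h6]
    field_simp
  · rw [h4]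
    have : Real.sign (u * v) / (u * Real.sqrt 2) * (Real.sqrt 2 * (|x * y| / s))
        = (Real.sign (u * v) * |x * y|) * (Real.sqrt 2 / Real.sqrt 2) / (u * s) := by
      ring
    rw [this, h5, hu, div_self h6]
    field_simp
end

section
/- Let (u,v) ∈ ℝ² with u² + v² ≤ 1, u ≠ 0 and v ≠ 0, and define x = sgn(u·v)/(v·√2) · √(1 − √(1 − 4u²v²)) and y = sgn(u·v)/(u·√2) · √(1 − √(1 − 4u²v²)). Then 1 − 4u²v² ≥ 0, and the 2-Squircular square-to-disc map recovers (u,v): x/√(1 + x²y²) = u and y/√(1 + x²y²) = v. -/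
/-- The 2-Squircular square-to-disc map inverts the disc-to-square formulas. -/
theorem two_squircular_right_inverse
    (u v x y : ℝ)
    (hd : u ^ 2 + v ^ 2 ≤ 1) (hu0 : u ≠ 0) (hv0 : v ≠ 0)
    (hx : x = Real.sign (u * v) / (v * Real.sqrt 2) *
      Real.sqrt (1 - Real.sqrt (1 - 4 * u ^ 2 * v ^ 2)))
    (hy : y = Real.sign (u * v) / (u * Real.sqrt 2) *
      Real.sqrt (1 - Real.sqrt (1 - 4 * u ^ 2 * v ^ 2))) :
    1 - 4 * u ^ 2 * v ^ 2 ≥ 0 ∧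
    x / Real.sqrt (1 + x ^ 2 * y ^ 2) = u ∧
    y / Real.sqrt (1 + x ^ 2 * y ^ 2) = v := by
  have ht : 1 - 4 * u ^ 2 * v ^ 2 ≥ 0 := by
    nlinarith [sq_nonneg (u ^ 2 - v ^ 2), sq_nonneg u, sq_nonneg v]
  refine ⟨ht, ?_⟩
  have huv : u * v ≠ 0 := mul_ne_zero hu0 hv0
  have hσ : Real.sign (u * v) ^ 2 = 1 ∧ 0 < Real.sign (u * v) * (u * v) := by
    rcases lt_or_gt_of_ne huv with h | h
    · rw [Real.sign_of_neg h]; constructor <;> linarith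
    · rw [Real.sign_of_pos h]; constructor <;> linarith
  obtain ⟨hσ2, hσt⟩ := hσ
  have hr0 := Real.sqrt_nonneg (1 - 4 * u ^ 2 * v ^ 2)
  have hr2 := Real.sq_sqrt ht
  have hpos : 0 < u ^ 2 * v ^ 2 := by positivity
  generalize Real.sqrt (1 - 4 * u ^ 2 * v ^ 2) = r at *
  have hr1 : 0 < 1 - r := by nlinarith
  have hs0 := Real.sqrt_pos.mpr hr1
  have hs2 := Real.sq_sqrt hr1.le
  generalize Real.sqrt (1 - r) = s at *
  have hq0 : 0 < Real.sqrt 2 := by positivity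
  have hq2 : Real.sqrt 2 ^ 2 = 2 := Real.sq_sqrt (by norm_num)
  generalize Real.sqrt 2 = q at *
  generalize Real.sign (u * v) = σ at *
  have hσ0 : σ ≠ 0 := by rintro rfl; simp at hσ2
  have hW : Real.sqrt (1 + x ^ 2 * y ^ 2) = σ * s / (q * (u * v)) := by
    have h0 : 0 ≤ σ * s / (q * (u * v)) := by
      have : σ * s / (q * (u * v)) = (σ * (u * v)) * s / (q * (u * v) ^ 2) := by
        field_simp
      rw [this]; positivity
    rw [Real.sqrt_eq_iff_mul_self_eq (by positivity) h0]
    have e1 : x ^ 2 * y ^ 2 = (1 - r) ^ 2 / (4 * (u ^ 2 * v ^ 2)) := by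
      have : x ^ 2 * y ^ 2 = (σ ^ 2) ^ 2 * (s ^ 2) ^ 2 / ((q ^ 2) ^ 2 * (u ^ 2 * v ^ 2)) := by
        rw [hx, hy]; field_simp
      rw [this, hσ2, hs2, hq2]; norm_num
    have e2 : σ * s / (q * (u * v)) * (σ * s / (q * (u * v)))
        = (1 - r) / (2 * (u ^ 2 * v ^ 2)) := by
      have : σ * s / (q * (u * v)) * (σ * s / (q * (u * v)))
        = σ ^ 2 * s ^ 2 / (q ^ 2 * (u ^ 2 * v ^ 2)) := by field_simp
      rw [this, hσ2, hs2, hq2, one_mul]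
    rw [e1, e2]
    field_simp
    linarith
  have hs0' := hs0.ne'
  have hq0' := hq0.ne'
  rw [hW]
  constructor
  · rw [hx]; field_simp
  · rw [hy]; field_simp
end

section
/- Let (x,y) ∈ [-1,1] × [-1,1] with x ≠ 0 and y ≠ 0, and define the 3-Squircular square-to-disc images u = (sgn(x·y)/y) · √((−1 + √(1 + 4x²y²(x² + y²)))/(2(x² + y²))) and v = (sgn(x·y)/x) · √((−1 + √(1 + 4x²y²(x² + y²)))/(2(x² + y²))). Then u² + v² > 0, 1 − 4u²v²(u² + v²) ≥ 0, and the 3-Squircular disc-to-square formulas recover (x,y): (sgn(u·v)/v) · √((1 − √(1 − 4u²v²(u² + v²)))/(2(u² + v²))) = x and (sgn(u·v)/u) · √((1 − √(1 − 4u²v²(u² + v²)))/(2(u² + v²))) = y. -/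
theorem sign_div_right_aux (a b : ℝ) (ha : a ≠ 0) (hb : b ≠ 0) :
    Real.sign (a * b) / b = a / |a * b| := by
  rcases lt_or_gt_of_ne (mul_ne_zero ha hb) with h | h
  · rw [Real.sign_of_neg h, abs_of_neg h]; field_simp
  · rw [Real.sign_of_pos h, abs_of_pos h]; field_simp

theorem sign_div_left_aux (a b : ℝ) (ha : a ≠ 0) (hb : b ≠ 0) :
    Real.sign (a * b) / a = b / |a * b| := by
  rw [mul_comm a b]; exact sign_div_right_aux b a hb ha

/-- The 3-Squircular disc-to-square formulas invert the 3-Squircular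
square-to-disc map. -/
theorem three_squircular_left_inverse
    (x y u v : ℝ)
    (hx : x ∈ Set.Icc (-1 : ℝ) 1) (hy : y ∈ Set.Icc (-1 : ℝ) 1)
    (hx0 : x ≠ 0) (hy0 : y ≠ 0)
    (hu : u = Real.sign (x * y) / y *
      Real.sqrt ((-1 + Real.sqrt (1 + 4 * x ^ 2 * y ^ 2 * (x ^ 2 + y ^ 2))) /
        (2 * (x ^ 2 + y ^ 2))))
    (hv : v = Real.sign (x * y) / x *
      Real.sqrt ((-1 + Real.sqrt (1 + 4 * x ^ 2 * y ^ 2 * (x ^ 2 + y ^ 2))) /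
        (2 * (x ^ 2 + y ^ 2)))) :
    0 < u ^ 2 + v ^ 2 ∧
    1 - 4 * u ^ 2 * v ^ 2 * (u ^ 2 + v ^ 2) ≥ 0 ∧
    Real.sign (u * v) / v *
      Real.sqrt ((1 - Real.sqrt (1 - 4 * u ^ 2 * v ^ 2 * (u ^ 2 + v ^ 2))) /
        (2 * (u ^ 2 + v ^ 2))) = x ∧
    Real.sign (u * v) / u *
      Real.sqrt ((1 - Real.sqrt (1 - 4 * u ^ 2 * v ^ 2 * (u ^ 2 + v ^ 2))) /
        (2 * (u ^ 2 + v ^ 2))) = y := by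
  have hX : 0 < x ^ 2 := by positivity
  have hY : 0 < y ^ 2 := by positivity
  have hX1 : x ^ 2 ≤ 1 := by nlinarith [hx.1, hx.2]
  have hY1 : y ^ 2 ≤ 1 := by nlinarith [hy.1, hy.2]
  have hxy : 0 < |x * y| := abs_pos.mpr (mul_ne_zero hx0 hy0)
  have hxy2 : |x * y| ^ 2 = x ^ 2 * y ^ 2 := by rw [sq_abs]; ring
  have hs : 0 < x ^ 2 + y ^ 2 := by positivity
  have hP : 0 < x ^ 2 * y ^ 2 * (x ^ 2 + y ^ 2) := by positivity
  have hP2 : x ^ 2 * y ^ 2 * (x ^ 2 + y ^ 2) ≤ 2 := by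
    have h1 : x ^ 2 * y ^ 2 ≤ 1 := by nlinarith
    nlinarith [mul_pos hX hY]
  rw [sign_div_right_aux x y hx0 hy0] at hu
  rw [sign_div_left_aux x y hx0 hy0] at hv
  set q := Real.sqrt (1 + 4 * x ^ 2 * y ^ 2 * (x ^ 2 + y ^ 2)) with hq
  have hq2 : q ^ 2 = 1 + 4 * x ^ 2 * y ^ 2 * (x ^ 2 + y ^ 2) :=
    Real.sq_sqrt (by positivity)
  have hq0 : 0 ≤ q := Real.sqrt_nonneg _
  have hq1 : 1 < q := by nlinarith
  have hR : 0 < (-1 + q) / (2 * (x ^ 2 + y ^ 2)) := div_pos (by linarith) (by positivity)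
  set r := Real.sqrt ((-1 + q) / (2 * (x ^ 2 + y ^ 2))) with hr
  have hr2 : r ^ 2 = (-1 + q) / (2 * (x ^ 2 + y ^ 2)) := Real.sq_sqrt hR.le
  have hr0 : 0 < r := Real.sqrt_pos.mpr hR
  have hqr : q = 1 + 2 * (x ^ 2 + y ^ 2) * r ^ 2 := by
    rw [hr2]; field_simp; ring
  have hrel : (x ^ 2 + y ^ 2) * r ^ 4 + r ^ 2 = x ^ 2 * y ^ 2 := by
    rw [hqr] at hq2
    have : (4 * (x ^ 2 + y ^ 2)) * ((x ^ 2 + y ^ 2) * r ^ 4 + r ^ 2)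
        = (4 * (x ^ 2 + y ^ 2)) * (x ^ 2 * y ^ 2) := by linarith
    exact mul_left_cancel₀ (by positivity) this
  obtain ⟨k, hk⟩ : ∃ k, k = r / |x * y| := ⟨_, rfl⟩
  have hk0 : 0 < k := by rw [hk]; positivity
  have hrk : r = k * |x * y| := by rw [hk]; field_simp
  have huk : u = k * x := by rw [hu, hk]; ring
  have hvk : v = k * y := by rw [hv, hk]; ring
  have hr2k : r ^ 2 = k ^ 2 * (x ^ 2 * y ^ 2) := by rw [hrk, mul_pow, hxy2]
  have hK : (x ^ 2 * y ^ 2 * (x ^ 2 + y ^ 2)) * k ^ 4 + k ^ 2 = 1 := by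
    have h4 : r ^ 4 = (k ^ 2 * (x ^ 2 * y ^ 2)) ^ 2 := by rw [← hr2k]; ring
    rw [h4, hr2k] at hrel
    have : (x ^ 2 * y ^ 2) * ((x ^ 2 * y ^ 2 * (x ^ 2 + y ^ 2)) * k ^ 4 + k ^ 2)
        = (x ^ 2 * y ^ 2) * 1 := by linarith
    exact mul_left_cancel₀ (by positivity) this
  have hhalf : 0 ≤ 2 * k ^ 2 - 1 := by
    have h4 : 0 ≤ k ^ 4 := by positivity
    have h5 : 1 ≤ 2 * k ^ 4 + k ^ 2 := by nlinarith
    by_contra hneg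
    nlinarith [sq_nonneg k]
  clear_value q r
  clear hu hv hq hr
  subst huk hvk
  have hdisc : 1 - 4 * (k * x) ^ 2 * (k * y) ^ 2 * ((k * x) ^ 2 + (k * y) ^ 2)
      = (2 * k ^ 2 - 1) ^ 2 := by
    linear_combination (-4 * k ^ 2) * hK
  have hin : (1 - (2 * k ^ 2 - 1)) / (2 * ((k * x) ^ 2 + (k * y) ^ 2))
      = (k * |x * y|) ^ 2 := by
    rw [mul_pow k |x * y|, hxy2, div_eq_iff (by positivity)]
    linear_combination (-2) * hK
  have hku : k * x ≠ 0 := mul_ne_zero hk0.ne' hx0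
  have hkv : k * y ≠ 0 := mul_ne_zero hk0.ne' hy0
  have habs : |k * x * (k * y)| = k ^ 2 * |x * y| := by
    rw [show k * x * (k * y) = k ^ 2 * (x * y) by ring, abs_mul, abs_of_pos (by positivity)]
  refine ⟨by positivity, ?_, ?_, ?_⟩
  · rw [hdisc]; positivity
  · rw [hdisc, Real.sqrt_sq hhalf, hin, Real.sqrt_sq (by positivity),
      sign_div_right_aux _ _ hku hkv, habs]
    field_simp
  · rw [hdisc, Real.sqrt_sq hhalf, hin, Real.sqrt_sq (by positivity),
      sign_div_left_aux _ _ hku hkv, habs]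
    field_simp
end

section
/- Let q ∈ ℝ with 0 < q ≤ 1, and let (x,y) ∈ (-1,1) × (-1,1). Set a² = q + 1 − q·y² and b² = q + 1 − q·x², and define the squelched Elliptical Grid images u = x·√((y²·a² − a²·b²)/(x²y² − a²·b²)) and v = y·√((x²·b² − a²·b²)/(x²y² − a²·b²)) (both ratios under the square roots are nonnegative since x²y² < a²b²). Then the squelched inverse formulas recover (x,y): sgn(u)/√(2q) · √(q + 1 + q·u² − v² − √((q + 1 + q·u² − v²)² − 4q(q + 1)u²)) = x and sgn(v)/√(2q) · √(q + 1 − u² + q·v² − √((q + 1 − u² + q·v²)² − 4q(q + 1)v²)) = y, the inner radicands being nonnegative. -/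
theorem squelched_half (q x R y u v : ℝ) (hq : 0 < q) (hq1 : q ≤ 1)
    (hX : x ^ 2 < 1) (hY : y ^ 2 < 1)
    (hD : x ^ 2 * y ^ 2 < (q + 1 - q * x ^ 2) * (q + 1 - q * y ^ 2))
    (hR : R * ((q + 1 - q * x ^ 2) * (q + 1 - q * y ^ 2) - x ^ 2 * y ^ 2) =
      (q + 1 - q * y ^ 2) * (q + 1 - q * x ^ 2 - y ^ 2))
    (hu : u = x * Real.sqrt R) (hv : v ^ 2 = (q + 1 - q * x ^ 2) * (1 - R)) :
    0 ≤ (q + 1 + q * u ^ 2 - v ^ 2) ^ 2 - 4 * q * (q + 1) * u ^ 2 ∧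
    Real.sign u / Real.sqrt (2 * q) *
      Real.sqrt (q + 1 + q * u ^ 2 - v ^ 2 -
        Real.sqrt ((q + 1 + q * u ^ 2 - v ^ 2) ^ 2 - 4 * q * (q + 1) * u ^ 2)) = x := by
  have hX0 := sq_nonneg x
  have hY0 := sq_nonneg y
  have hA : 1 < q + 1 - q * y ^ 2 := by nlinarith
  have hB : 1 < q + 1 - q * x ^ 2 := by nlinarith
  have hRpos : 0 < R := by
    have h : 0 < (q + 1 - q * y ^ 2) * (q + 1 - q * x ^ 2 - y ^ 2) :=
      mul_pos (by linarith) (by linarith)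
    rw [← hR] at h
    exact pos_of_mul_pos_left h (by linarith)
  have hle : q * x ^ 2 ≤ (q + 1) * R := by
    refine le_of_mul_le_mul_right ?_ (sub_pos.mpr hD)
    rw [mul_assoc (q + 1), hR]
    have h1 : y ^ 2 * (1 + x ^ 2) ≤
        (q + 1 - q * y ^ 2) * ((q + 1 - q * x ^ 2) + 1) := by nlinarith
    have h2 : 0 ≤ q * (1 - x ^ 2) * ((q + 1 - q * y ^ 2) * ((q + 1 - q * x ^ 2) + 1)
        - y ^ 2 * (1 + x ^ 2)) :=
      mul_nonneg (mul_nonneg hq.le (by linarith)) (by linarith)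
    have h3 : 0 ≤ (q + 1) * ((1 - y ^ 2) * (1 - q * y ^ 2)) :=
      mul_nonneg (by linarith) (mul_nonneg (by linarith) (by nlinarith))
    linarith
  have hu2 : u ^ 2 = x ^ 2 * R := by rw [hu, mul_pow, Real.sq_sqrt hRpos.le]
  have hdisc : (q + 1 + q * u ^ 2 - v ^ 2) ^ 2 - 4 * q * (q + 1) * u ^ 2 =
      ((q + 1) * R - q * x ^ 2) ^ 2 := by rw [hu2, hv]; ring
  refine ⟨hdisc ▸ sq_nonneg _, ?_⟩
  have hin : q + 1 + q * u ^ 2 - v ^ 2 - ((q + 1) * R - q * x ^ 2) = (2 * q) * x ^ 2 := by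
    rw [hu2, hv]; ring
  rw [hdisc, Real.sqrt_sq (by linarith), hin, Real.sqrt_mul (x := 2 * q) (by linarith) (x ^ 2), Real.sqrt_sq_eq_abs]
  have hs : Real.sqrt (2 * q) ≠ 0 := (Real.sqrt_pos.mpr (by linarith)).ne'
  have hsR := Real.sqrt_pos.mpr hRpos
  rw [← mul_assoc, div_mul_cancel₀ _ hs]
  rcases lt_trichotomy x 0 with h | h | h
  · rw [Real.sign_of_neg (hu ▸ mul_neg_of_neg_of_pos h hsR), abs_of_neg h]; ring
  · simp [h]
  · rw [Real.sign_of_pos (hu ▸ mul_pos h hsR), abs_of_pos h]; ring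

/-- The squelched Elliptical Grid inverse formulas recover the point of the
open square. -/
theorem squelched_elliptical_grid_inverse
    (q x y u v : ℝ)
    (hq : 0 < q) (hq1 : q ≤ 1)
    (hx : x ∈ Set.Ioo (-1 : ℝ) 1) (hy : y ∈ Set.Ioo (-1 : ℝ) 1)
    (hu : u = x * Real.sqrt
      ((y ^ 2 * (q + 1 - q * y ^ 2) - (q + 1 - q * x ^ 2) * (q + 1 - q * y ^ 2)) /
        (x ^ 2 * y ^ 2 - (q + 1 - q * x ^ 2) * (q + 1 - q * y ^ 2))))
    (hv : v = y * Real.sqrt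
      ((x ^ 2 * (q + 1 - q * x ^ 2) - (q + 1 - q * x ^ 2) * (q + 1 - q * y ^ 2)) /
        (x ^ 2 * y ^ 2 - (q + 1 - q * x ^ 2) * (q + 1 - q * y ^ 2)))) :
    x ^ 2 * y ^ 2 < (q + 1 - q * x ^ 2) * (q + 1 - q * y ^ 2) ∧
    0 ≤ (y ^ 2 * (q + 1 - q * y ^ 2) - (q + 1 - q * x ^ 2) * (q + 1 - q * y ^ 2)) /
        (x ^ 2 * y ^ 2 - (q + 1 - q * x ^ 2) * (q + 1 - q * y ^ 2)) ∧
    0 ≤ (x ^ 2 * (q + 1 - q * x ^ 2) - (q + 1 - q * x ^ 2) * (q + 1 - q * y ^ 2)) /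
        (x ^ 2 * y ^ 2 - (q + 1 - q * x ^ 2) * (q + 1 - q * y ^ 2)) ∧
    0 ≤ (q + 1 + q * u ^ 2 - v ^ 2) ^ 2 - 4 * q * (q + 1) * u ^ 2 ∧
    0 ≤ (q + 1 - u ^ 2 + q * v ^ 2) ^ 2 - 4 * q * (q + 1) * v ^ 2 ∧
    Real.sign u / Real.sqrt (2 * q) *
      Real.sqrt (q + 1 + q * u ^ 2 - v ^ 2 -
        Real.sqrt ((q + 1 + q * u ^ 2 - v ^ 2) ^ 2 - 4 * q * (q + 1) * u ^ 2)) = x ∧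
    Real.sign v / Real.sqrt (2 * q) *
      Real.sqrt (q + 1 - u ^ 2 + q * v ^ 2 -
        Real.sqrt ((q + 1 - u ^ 2 + q * v ^ 2) ^ 2 - 4 * q * (q + 1) * v ^ 2)) = y := by
  have hX : x ^ 2 < 1 := by nlinarith [hx.1, hx.2]
  have hY : y ^ 2 < 1 := by nlinarith [hy.1, hy.2]
  have hX0 := sq_nonneg x
  have hY0 := sq_nonneg y
  have hA : 1 < q + 1 - q * y ^ 2 := by nlinarith
  have hB : 1 < q + 1 - q * x ^ 2 := by nlinarith
  have hD : x ^ 2 * y ^ 2 < (q + 1 - q * x ^ 2) * (q + 1 - q * y ^ 2) := by nlinarith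
  have hne : x ^ 2 * y ^ 2 - (q + 1 - q * x ^ 2) * (q + 1 - q * y ^ 2) ≠ 0 := by linarith
  have hR0 : 0 ≤ (y ^ 2 * (q + 1 - q * y ^ 2) - (q + 1 - q * x ^ 2) * (q + 1 - q * y ^ 2)) /
        (x ^ 2 * y ^ 2 - (q + 1 - q * x ^ 2) * (q + 1 - q * y ^ 2)) :=
    div_nonneg_of_nonpos (by nlinarith) (by linarith)
  have hS0 : 0 ≤ (x ^ 2 * (q + 1 - q * x ^ 2) - (q + 1 - q * x ^ 2) * (q + 1 - q * y ^ 2)) /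
        (x ^ 2 * y ^ 2 - (q + 1 - q * x ^ 2) * (q + 1 - q * y ^ 2)) :=
    div_nonneg_of_nonpos (by nlinarith) (by linarith)
  refine ⟨hD, hR0, hS0, ?_⟩
  have hR := div_mul_cancel₀
    (y ^ 2 * (q + 1 - q * y ^ 2) - (q + 1 - q * x ^ 2) * (q + 1 - q * y ^ 2)) hne
  have hS := div_mul_cancel₀
    (x ^ 2 * (q + 1 - q * x ^ 2) - (q + 1 - q * x ^ 2) * (q + 1 - q * y ^ 2)) hne
  generalize (y ^ 2 * (q + 1 - q * y ^ 2) - (q + 1 - q * x ^ 2) * (q + 1 - q * y ^ 2)) /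
        (x ^ 2 * y ^ 2 - (q + 1 - q * x ^ 2) * (q + 1 - q * y ^ 2)) = R at *
  generalize (x ^ 2 * (q + 1 - q * x ^ 2) - (q + 1 - q * x ^ 2) * (q + 1 - q * y ^ 2)) /
        (x ^ 2 * y ^ 2 - (q + 1 - q * x ^ 2) * (q + 1 - q * y ^ 2)) = S at *
  have hu2 : u ^ 2 = x ^ 2 * R := by rw [hu, mul_pow, Real.sq_sqrt hR0]
  have hv2 : v ^ 2 = y ^ 2 * S := by rw [hv, mul_pow, Real.sq_sqrt hS0]
  have hv3 : v ^ 2 = (q + 1 - q * x ^ 2) * (1 - R) := by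
    rw [hv2]
    apply mul_right_cancel₀ hne
    linear_combination y ^ 2 * hS + (q + 1 - q * x ^ 2) * hR
  have hu3 : u ^ 2 = (q + 1 - q * y ^ 2) * (1 - S) := by
    rw [hu2]
    apply mul_right_cancel₀ hne
    linear_combination x ^ 2 * hR + (q + 1 - q * y ^ 2) * hS
  obtain ⟨h1, h2⟩ := squelched_half q x R y u v hq hq1 hX hY hD
    (by linear_combination -hR) hu hv3
  obtain ⟨h3, h4⟩ := squelched_half q y S x v u hq hq1 hY hX (by linarith)
    (by linear_combination -hS) hv hu3
  have he : q + 1 - u ^ 2 + q * v ^ 2 = q + 1 + q * v ^ 2 - u ^ 2 := by ring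
  rw [he]
  exact ⟨h1, h3, h2, h4⟩
end

section
/- The constant K_e = ∫₀^{π/2} dt/√(1 − (1/2)sin²t) (the complete Legendre elliptic integral of the first kind with modulus 1/√2) equals L_e/√2, where L_e = Γ(1/4)²/(2√(2π)) is the lemniscate constant; equivalently, ∫₀^{π/2} dt/√(1 − (1/2)sin²t) = Γ(1/4)²/(4√π). -/
/-- The real Beta integral `B(1/4, 1/2)` in terms of Gamma values. -/
theorem aux_beta :
    (∫ x in (0 : ℝ)..1, x ^ ((1 / 4 : ℝ) - 1) * (1 - x) ^ ((1 / 2 : ℝ) - 1)) =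
      Real.Gamma (1 / 4) * Real.Gamma (1 / 2) / Real.Gamma (3 / 4) := by
  have h := Complex.betaIntegral_eq_Gamma_mul_div ((1 / 4 : ℝ) : ℂ) ((1 / 2 : ℝ) : ℂ)
    (by rw [Complex.ofReal_re]; norm_num) (by rw [Complex.ofReal_re]; norm_num)
  rw [← Complex.ofReal_add, Complex.Gamma_ofReal, Complex.Gamma_ofReal, Complex.Gamma_ofReal,
    show (1 / 4 + 1 / 2 : ℝ) = 3 / 4 by norm_num] at h
  have h2 : Complex.betaIntegral ((1 / 4 : ℝ) : ℂ) ((1 / 2 : ℝ) : ℂ) =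
      ((∫ x in (0 : ℝ)..1, x ^ ((1 / 4 : ℝ) - 1) * (1 - x) ^ ((1 / 2 : ℝ) - 1) : ℝ) : ℂ) := by
    rw [Complex.betaIntegral, ← intervalIntegral.integral_ofReal]
    apply intervalIntegral.integral_congr
    intro x hx
    rw [Set.uIcc_of_le zero_le_one] at hx
    simp only []
    rw [Complex.ofReal_mul, Complex.ofReal_cpow hx.1, Complex.ofReal_cpow (by linarith [hx.2])]
    push_cast
    rfl
  rw [h2] at h
  exact_mod_cast h

/-- The substitution `x = cos⁴ t` at the level of integrands. -/
theorem aux_integrand (t : ℝ) (ht : t ∈ Set.Ioo 0 (Real.pi / 2)) :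
    1 / Real.sqrt (1 - (1 / 2) * Real.sin t ^ 2) =
      -(Real.sqrt 2 / 4) * (((Real.cos t ^ 4) ^ ((1 / 4 : ℝ) - 1) *
        (1 - Real.cos t ^ 4) ^ ((1 / 2 : ℝ) - 1)) * (-(4 * Real.cos t ^ 3 * Real.sin t))) := by
  have hc : 0 < Real.cos t := Real.cos_pos_of_mem_Ioo ⟨by linarith [ht.1, ht.2], ht.2⟩
  have hs : 0 < Real.sin t := Real.sin_pos_of_pos_of_lt_pi ht.1 (by linarith [ht.1, ht.2])
  have hq := Real.sin_sq_add_cos_sq t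
  set c := Real.cos t
  set s := Real.sin t
  have e1 : (c ^ 4) ^ ((1 / 4 : ℝ) - 1) = (c ^ 3)⁻¹ := by
    rw [← Real.rpow_natCast c 4, ← Real.rpow_natCast c 3, ← Real.rpow_mul hc.le,
      ← Real.rpow_neg hc.le]
    norm_num
  have e2 : (1 - c ^ 4) ^ ((1 / 2 : ℝ) - 1) = (s * Real.sqrt (1 + c ^ 2))⁻¹ := by
    have : 1 - c ^ 4 = s ^ 2 * (1 + c ^ 2) := by
      rw [show s ^ 2 = 1 - c ^ 2 by linarith]; ring
    rw [this, show (1 / 2 : ℝ) - 1 = -(1 / 2) by norm_num, Real.rpow_neg (by positivity),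
      ← Real.sqrt_eq_rpow, Real.sqrt_mul (by positivity), Real.sqrt_sq hs.le]
  have e3 : Real.sqrt (1 - (1 / 2) * s ^ 2) = Real.sqrt (1 + c ^ 2) / Real.sqrt 2 := by
    rw [← Real.sqrt_div (by positivity)]
    congr 1
    linarith
  have h1 : 0 < Real.sqrt (1 + c ^ 2) := by positivity
  rw [e1, e2, e3]
  field_simp

/-- The elliptic integral in terms of Gamma values. -/
theorem aux_main :
    (∫ t in (0 : ℝ)..(Real.pi / 2),
        1 / Real.sqrt (1 - (1 / 2) * Real.sin t ^ 2)) =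
      (Real.Gamma (1 / 4)) ^ 2 / (4 * Real.sqrt Real.pi) := by
  have hp := Real.pi_pos
  have hp2 : (0 : ℝ) ≤ Real.pi / 2 := by positivity
  rw [intervalIntegral.integral_congr_Ioo_of_le hp2 aux_integrand,
    intervalIntegral.integral_const_mul]
  have key := intervalIntegral.integral_comp_mul_deriv_of_deriv_nonpos
    (a := 0) (b := Real.pi / 2)
    (f := fun t => Real.cos t ^ 4) (f' := fun t => -(4 * Real.cos t ^ 3 * Real.sin t))
    (g := fun x => x ^ ((1 / 4 : ℝ) - 1) * (1 - x) ^ ((1 / 2 : ℝ) - 1))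
    (by fun_prop)
    (by
      intro x _
      refine ((Real.hasDerivAt_cos x).fun_pow 4).congr_deriv ?_
      norm_num)
    (by
      intro x hx
      rw [min_eq_left hp2, max_eq_right hp2] at hx
      have hc : 0 < Real.cos x := Real.cos_pos_of_mem_Ioo ⟨by linarith [hx.1, hx.2], hx.2⟩
      have hs : 0 < Real.sin x := Real.sin_pos_of_pos_of_lt_pi hx.1 (by linarith [hx.1, hx.2])
      have : 0 < 4 * Real.cos x ^ 3 * Real.sin x := by positivity
      linarith)
  simp only [Function.comp_def] at key
  rw [key, Real.cos_zero, Real.cos_pi_div_two, one_pow, zero_pow (by norm_num),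
    intervalIntegral.integral_symm, aux_beta, Real.Gamma_one_half_eq]
  have hr := Real.Gamma_mul_Gamma_one_sub (1 / 4)
  rw [show (1 : ℝ) - 1 / 4 = 3 / 4 by norm_num, show Real.pi * (1 / 4) = Real.pi / 4 by ring,
    Real.sin_pi_div_four] at hr
  have g1 : 0 < Real.Gamma (1 / 4) := Real.Gamma_pos_of_pos (by norm_num)
  have g3 : 0 < Real.Gamma (3 / 4) := Real.Gamma_pos_of_pos (by norm_num)
  have s2 : Real.sqrt 2 ^ 2 = 2 := Real.sq_sqrt (by norm_num)
  have sp : Real.sqrt Real.pi ^ 2 = Real.pi := Real.sq_sqrt hp.le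
  have hs2 : 0 < Real.sqrt 2 := by positivity
  have hsp : 0 < Real.sqrt Real.pi := by positivity
  have hr2 : Real.Gamma (1 / 4) * Real.Gamma (3 / 4) = Real.sqrt 2 * Real.sqrt Real.pi ^ 2 := by
    rw [hr, sp]
    field_simp
    rw [s2]
  rw [mul_neg, neg_mul, neg_neg, div_mul_div_comm, div_eq_div_iff (by positivity) (by positivity)]
  linear_combination (-4 * Real.Gamma (1 / 4)) * hr2


open Real in
/-- The complete Legendre elliptic integral of the first kind with modulus
1/√2 equals the lemniscate constant divided by √2, i.e. Γ(1/4)²/(4√π). -/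
theorem elliptic_integral_eq_lemniscate_constant :
    (∫ t in (0 : ℝ)..(Real.pi / 2),
        1 / Real.sqrt (1 - (1 / 2) * Real.sin t ^ 2)) =
      (Real.Gamma (1 / 4)) ^ 2 / (2 * Real.sqrt (2 * Real.pi)) / Real.sqrt 2 ∧
    (∫ t in (0 : ℝ)..(Real.pi / 2),
        1 / Real.sqrt (1 - (1 / 2) * Real.sin t ^ 2)) =
      (Real.Gamma (1 / 4)) ^ 2 / (4 * Real.sqrt Real.pi) := by
  refine ⟨?_, aux_main⟩
  rw [aux_main, Real.sqrt_mul (by norm_num) Real.pi, div_div]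
  congr 1
  have s2 : Real.sqrt 2 ^ 2 = 2 := Real.sq_sqrt (by norm_num)
  linear_combination (-2 * Real.sqrt Real.pi) * s2
end
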